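/- Let m, n, J be real numbers and k, t natural numbers. Then Σ_{q=0}^{t} ( Σ_{i=0}^{t−q} binom(m, k+i) · C(k+i, k) · binom(J, t−q−i) ) · binom(n, q) = binom(m, k) · binom(m+n−k+J, t), where C(k+i,k) is the ordinary binomial coefficient. -/

import Mathlib

noncomputable section

open scoped Classical

/-- The generalized binomial coefficient `a (a-1) ⋯ (a-k+1) / k!` in a field `K`
(of characteristic zero in all uses). -/
def gbinom {K : Type*} [Field K] (a : K) (k : ℕ) : K :=
  (∏ i ∈ Finset.range k, (a - (i : K))) / (k.factorial : K)

/-- `Tsum x i l = Σ_{(j₁,…,j_i) ∈ T(i,l)} binom(x,j₁)⋯binom(x,j_i)`, the sum over all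
`i`-tuples of positive integers with sum `l` (a finitely supported sum). -/
def Tsum (x : ℝ) (i l : ℕ) : ℝ :=
  ∑ᶠ c : Fin i → ℕ,
    if (∀ t, 1 ≤ c t) ∧ (∑ t, c t) = l then ∏ t, gbinom x (c t) else 0

end

theorem gbinom_eq_choose (a : ℝ) (k : ℕ) : gbinom a k = Ring.choose a k := by
  rw [Ring.choose_eq_smul, gbinom, ← descPochhammer_eval_eq_prod_range,
    Polynomial.descPochhammer_smeval_eq_ascPochhammer, Polynomial.ascPochhammer_smeval_eq_eval,
    descPochhammer_eval_eq_ascPochhammer, smul_eq_mul, div_eq_inv_mul]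

theorem gbinom_add (a b : ℝ) (t : ℕ) :
    ∑ i ∈ Finset.range (t + 1), gbinom a i * gbinom b (t - i) = gbinom (a + b) t := by
  simp only [gbinom_eq_choose]
  rw [Ring.add_choose_eq t (Commute.all a b),
    Finset.Nat.sum_antidiagonal_eq_sum_range_succ_mk]

theorem gbinom_mul (m : ℝ) (k i : ℕ) :
    gbinom m (k + i) * ((k + i).choose k : ℝ) = gbinom m k * gbinom (m - k) i := by
  unfold gbinom
  rw [Finset.prod_range_add, Nat.cast_add_choose]
  have h1 : ((k + i).factorial : ℝ) ≠ 0 := by positivity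
  have h2 : (k.factorial : ℝ) ≠ 0 := by positivity
  have h3 : (i.factorial : ℝ) ≠ 0 := by positivity
  have h4 : ∏ x ∈ Finset.range i, (m - ((k + x : ℕ) : ℝ))
      = ∏ x ∈ Finset.range i, (m - k - (x : ℝ)) :=
    Finset.prod_congr rfl fun x _ => by push_cast; ring
  rw [h4]
  field_simp

/-- for reals `m`, `n`, `J` and naturals `k`, `t`:
`Σ_{q=0}^{t} (Σ_{i=0}^{t−q} binom(m,k+i) C(k+i,k) binom(J,t−q−i)) binom(n,q)
  = binom(m,k) binom(m+n−k+J, t)`. -/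
theorem vandermonde_type_identity (m n J : ℝ) (k t : ℕ) :
    ∑ q ∈ Finset.range (t + 1),
        (∑ i ∈ Finset.range (t - q + 1),
          gbinom m (k + i) * ((k + i).choose k : ℝ) * gbinom J (t - q - i)) * gbinom n q =
      gbinom m k * gbinom (m + n - (k : ℝ) + J) t := by
  have h : ∀ q, (∑ i ∈ Finset.range (t - q + 1),
          gbinom m (k + i) * ((k + i).choose k : ℝ) * gbinom J (t - q - i))
      = gbinom m k * gbinom (m - k + J) (t - q) := by
    intro q
    rw [← gbinom_add, Finset.mul_sum]
    exact Finset.sum_congr rfl fun i _ => by rw [gbinom_mul, mul_assoc]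
  have e : m + n - (k : ℝ) + J = n + (m - k + J) := by ring
  rw [e, ← gbinom_add, Finset.mul_sum]
  exact Finset.sum_congr rfl fun q _ => by rw [h]; ring
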